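/- arXiv:2510.23903 — 3 statements merged into one kernel-verified Lean document; each statement's English description precedes it below -/
import Mathlib

section
/- For every composition σ = (r_1,...,r_k) of a positive integer n, the vector (h_0(σ), h_1(σ), ..., h_n(σ)) is unimodal: h_0(σ) ≤ h_1(σ) ≤ ... ≤ h_{⌊n/2⌋}(σ). -/
open Finset Polynomial

/-- `pSum σ i = r₁ + ⋯ + rᵢ`, the `i`-th partial sum of the composition `σ`. -/
def pSum (σ : List ℕ) (i : ℕ) : ℕ := (σ.take i).sum

/-- Membership in the set `P_σ ⊆ ℕⁿ`: the partial sum of the first `s_i`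
coordinates is at most `s_i` for every `i ∈ [k]`. -/
def memP (n : ℕ) (σ : List ℕ) (a : Fin n → ℕ) : Prop :=
  ∀ i, 1 ≤ i → i ≤ σ.length →
    (∑ j ∈ Finset.univ.filter (fun j : Fin n => (j : ℕ) < pSum σ i), a j) ≤ pSum σ i

/-- The number of nonzero coordinates of a tuple. -/
def nonzeroCount {n : ℕ} (a : Fin n → ℕ) : ℕ :=
  (Finset.univ.filter (fun j => a j ≠ 0)).card

/-- `h_i(σ)`: the number of points of `P_σ` with exactly `i` nonzero coordinates. -/
noncomputable def hVec (n : ℕ) (σ : List ℕ) (i : ℕ) : ℕ :=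
  {a : Fin n → ℕ | memP n σ a ∧ nonzeroCount a = i}.ncard

/-- Partial sum of the coordinates with index below `p`. -/
def FS {n : ℕ} (a : Fin n → ℕ) (p : ℕ) : ℕ :=
  ∑ j ∈ Finset.univ.filter (fun j : Fin n => (j : ℕ) < p), a j

/-- support as naturals -/
def AS {n : ℕ} (a : Fin n → ℕ) : Finset ℕ :=
  (Finset.univ.filter (fun j => a j ≠ 0)).map Fin.valEmbedding

/-- set of partial sums, shifted by one -/
def BS {n : ℕ} (a : Fin n → ℕ) : Finset ℕ :=
  (AS a).image (fun l => FS a (l + 1) - 1)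

lemma mem_AS {n : ℕ} (a : Fin n → ℕ) (l : ℕ) : l ∈ AS a ↔ ∃ h : l < n, a ⟨l, h⟩ ≠ 0 := by
  unfold AS
  simp only [Finset.mem_map, Finset.mem_filter, Finset.mem_univ, true_and]
  constructor
  · rintro ⟨j, hj, rfl⟩
    exact ⟨j.2, hj⟩
  · rintro ⟨h, hl⟩
    exact ⟨⟨l, h⟩, hl, rfl⟩

lemma FS_zero {n : ℕ} (a : Fin n → ℕ) : FS a 0 = 0 := by simp [FS]

lemma FS_succ {n : ℕ} (a : Fin n → ℕ) (j : ℕ) (h : j < n) :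
    FS a (j + 1) = FS a j + a ⟨j, h⟩ := by
  unfold FS
  have : Finset.univ.filter (fun i : Fin n => (i : ℕ) < j + 1) =
      insert ⟨j, h⟩ (Finset.univ.filter (fun i : Fin n => (i : ℕ) < j)) := by
    ext i
    simp only [Finset.mem_filter, Finset.mem_univ, true_and, Finset.mem_insert, Fin.ext_iff]
    omega
  rw [this, Finset.sum_insert (by simp), add_comm]

lemma FS_mono {n : ℕ} (a : Fin n → ℕ) : Monotone (FS a) := by
  intro p q hpq
  unfold FS
  apply Finset.sum_le_sum_of_subset
  intro j
  simp only [Finset.mem_filter, Finset.mem_univ, true_and]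
  omega

lemma FS_succ_ge {n : ℕ} (a : Fin n → ℕ) (j : ℕ) (h : n ≤ j) : FS a (j + 1) = FS a j := by
  unfold FS
  congr 1
  ext i
  have := i.2
  simp only [Finset.mem_filter, Finset.mem_univ, true_and]
  omega

lemma FS_mem {n : ℕ} (a : Fin n → ℕ) (l : ℕ) (h : l ∈ AS a) : FS a l < FS a (l + 1) := by
  obtain ⟨h1, h2⟩ := (mem_AS a l).1 h
  rw [FS_succ a l h1]
  omega

lemma FS_not_mem {n : ℕ} (a : Fin n → ℕ) (l : ℕ) (h : l ∉ AS a) : FS a (l + 1) = FS a l := by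
  by_cases h1 : l < n
  · rw [FS_succ a l h1]
    have : a ⟨l, h1⟩ = 0 := by
      by_contra h2
      exact h ((mem_AS a l).2 ⟨h1, h2⟩)
    omega
  · exact FS_succ_ge a l (by omega)

lemma BS_inj {n : ℕ} (a : Fin n → ℕ) :
    Set.InjOn (fun l => FS a (l + 1) - 1) (AS a : Set ℕ) := by
  intro l hl m hm h
  have h1 := FS_mem a l hl
  have h2 := FS_mem a m hm
  simp only at h
  rcases lt_trichotomy l m with h3 | h3 | h3
  · have := FS_mono a (show l + 1 ≤ m from h3)
    omega
  · exact h3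
  · have := FS_mono a (show m + 1 ≤ l from h3)
    omega

lemma FS_le_of {n : ℕ} (a : Fin n → ℕ) (p j : ℕ)
    (h : ∀ l ∈ AS a, l < j → FS a (l + 1) ≤ p) : FS a j ≤ p := by
  induction j with
  | zero => simp [FS_zero]
  | succ j ih =>
    by_cases hj : j ∈ AS a
    · exact h j hj (by omega)
    · rw [FS_not_mem a j hj]
      exact ih (fun l hl hlj => h l hl (by omega))

/-- number of elements below `p` -/
def cnt (A : Finset ℕ) (p : ℕ) : ℕ := (A.filter (fun x => x < p)).card

lemma cnt_BS {n : ℕ} (a : Fin n → ℕ) (p : ℕ) :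
    cnt (BS a) p = ((AS a).filter (fun l => FS a (l + 1) ≤ p)).card := by
  unfold cnt BS
  rw [Finset.filter_image, Finset.card_image_of_injOn]
  · congr 1
    apply Finset.filter_congr
    intro l hl
    have := FS_mem a l hl
    omega
  · exact (BS_inj a).mono (by intro x hx; simp at hx; exact hx.1)

lemma key {n : ℕ} (a : Fin n → ℕ) (j p : ℕ) : FS a j ≤ p ↔ cnt (AS a) j ≤ cnt (BS a) p := by
  rw [cnt_BS]
  unfold cnt
  constructor
  · intro h
    apply Finset.card_le_card
    intro l
    simp only [Finset.mem_filter]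
    rintro ⟨h1, h2⟩
    exact ⟨h1, (FS_mono a (show l + 1 ≤ j from h2)).trans h⟩
  · intro h
    by_contra hlt
    push Not at hlt
    have : ∃ l ∈ AS a, l < j ∧ p < FS a (l + 1) := by
      by_contra hno
      push Not at hno
      exact absurd (FS_le_of a p j hno) (by omega)
    obtain ⟨l, hl, hlj, hlp⟩ := this
    apply absurd h
    push Not
    apply Finset.card_lt_card
    rw [Finset.ssubset_iff_of_subset]
    · refine ⟨l, ?_, ?_⟩ <;> simp only [Finset.mem_filter]
      · exact ⟨hl, hlj⟩
      · rintro ⟨_, h⟩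
        omega
    · intro m
      simp only [Finset.mem_filter]
      rintro ⟨h1, h2⟩
      refine ⟨h1, ?_⟩
      by_contra hjm
      have := FS_mono a (show j ≤ m + 1 by omega)
      omega

lemma cnt_succ_mem (A : Finset ℕ) (p : ℕ) (h : p ∈ A) : cnt A (p + 1) = cnt A p + 1 := by
  unfold cnt
  have : A.filter (fun x => x < p + 1) = insert p (A.filter (fun x => x < p)) := by
    ext x
    simp only [Finset.mem_filter, Finset.mem_insert]
    constructor
    · rintro ⟨h1, h2⟩
      by_cases hx : x = p
      · exact Or.inl hx
      · exact Or.inr ⟨h1, by omega⟩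
    · rintro (rfl | ⟨h1, h2⟩)
      · exact ⟨h, by omega⟩
      · exact ⟨h1, by omega⟩
  rw [this, Finset.card_insert_of_notMem (by simp)]

lemma cnt_succ_not_mem (A : Finset ℕ) (p : ℕ) (h : p ∉ A) : cnt A (p + 1) = cnt A p := by
  unfold cnt
  congr 1
  apply Finset.filter_congr
  intro x hx
  have : x ≠ p := fun h' => h (h' ▸ hx)
  omega

lemma cnt_zero (A : Finset ℕ) : cnt A 0 = 0 := by simp [cnt]

lemma cnt_mono (A : Finset ℕ) : Monotone (cnt A) := by
  intro p q h
  apply Finset.card_le_card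
  intro x
  simp only [Finset.mem_filter]
  rintro ⟨h1, h2⟩
  exact ⟨h1, by omega⟩

lemma cnt_full (A : Finset ℕ) (n : ℕ) (h : A ⊆ Finset.range n) : cnt A n = A.card := by
  unfold cnt
  rw [Finset.filter_true_of_mem]
  intro x hx
  simpa using h hx

lemma exists_inv (n : ℕ) (A B : Finset ℕ) (hA : A ⊆ Finset.range n) (hB : B ⊆ Finset.range n)
    (hc : A.card = B.card) : ∃ a : Fin n → ℕ, AS a = A ∧ BS a = B := by
  classical
  have hex : ∀ j, ∃ p, cnt A j ≤ cnt B p := by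
    intro j
    refine ⟨n, ?_⟩
    rw [cnt_full B n hB, ← hc]
    exact Finset.card_le_card (Finset.filter_subset _ _)
  let G : ℕ → ℕ := fun j => Nat.find (hex j)
  have hG1 : ∀ j, cnt A j ≤ cnt B (G j) := fun j => Nat.find_spec (hex j)
  have hG2 : ∀ j p, cnt A j ≤ cnt B p → G j ≤ p := fun j p h => Nat.find_min' (hex j) h
  have hG0 : G 0 = 0 := by
    have := hG2 0 0 (by simp [cnt_zero])
    omega
  have hGn : ∀ j, j ∉ A → G (j + 1) = G j := by
    intro j hj
    have e := cnt_succ_not_mem A j hj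
    apply le_antisymm
    · exact hG2 _ _ (by rw [e]; exact hG1 j)
    · exact hG2 _ _ (by rw [← e]; exact hG1 (j + 1))
  have hGm : ∀ j, j ∈ A → G j < G (j + 1) ∧ G (j + 1) - 1 ∈ B := by
    intro j hj
    have e := cnt_succ_mem A j hj
    have h1 := hG1 (j + 1)
    obtain ⟨q, hq⟩ : ∃ q, G (j + 1) = q + 1 := by
      refine Nat.exists_eq_succ_of_ne_zero ?_
      intro h0
      rw [h0, cnt_zero] at h1
      omega
    have hqB : q ∈ B := by
      by_contra hq'
      have e2 := cnt_succ_not_mem B q hq'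
      have := hG2 (j + 1) q (by rw [← e2, ← hq]; exact h1)
      omega
    have e2 := cnt_succ_mem B q hqB
    rw [hq] at h1
    have := hG2 j q (by omega)
    refine ⟨by omega, ?_⟩
    rw [hq]
    simpa using hqB
  have hGmono : ∀ j, G j ≤ G (j + 1) := by
    intro j
    by_cases hj : j ∈ A
    · exact (hGm j hj).1.le
    · exact (hGn j hj).ge
  let a : Fin n → ℕ := fun j => G (j + 1) - G j
  have hF : ∀ j, j ≤ n → FS a j = G j := by
    intro j
    induction j with
    | zero => intro _; rw [FS_zero, hG0]
    | succ j ih =>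
      intro hj
      rw [FS_succ a j (by omega), ih (by omega)]
      have := hGmono j
      show G j + (G (j + 1) - G j) = _
      omega
  have hAS : AS a = A := by
    ext l
    rw [mem_AS]
    constructor
    · rintro ⟨h, h2⟩
      by_contra hl
      have := hGn l hl
      apply h2
      show G (l + 1) - G l = 0
      omega
    · intro hl
      refine ⟨by simpa using hA hl, ?_⟩
      have := (hGm l hl).1
      show G (l + 1) - G l ≠ 0
      omega
  refine ⟨a, hAS, ?_⟩
  apply Finset.eq_of_subset_of_card_le
  · intro x hx
    unfold BS at hx
    rw [Finset.mem_image] at hx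
    obtain ⟨l, hl, rfl⟩ := hx
    rw [hAS] at hl
    have hln : l < n := by simpa using hA hl
    rw [hF (l + 1) (by omega)]
    exact (hGm l hl).2
  · unfold BS
    rw [Finset.card_image_of_injOn (BS_inj a), hAS, hc]

/-- the pair condition -/
def QP (σ : List ℕ) (A B : Finset ℕ) : Prop :=
  ∀ i, 1 ≤ i → i ≤ σ.length → cnt A (pSum σ i) ≤ cnt B (pSum σ i)

open Classical in
/-- pairs of subsets -/
noncomputable def TP (n : ℕ) (σ : List ℕ) (i : ℕ) : Finset (Finset ℕ × Finset ℕ) :=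
  ((Finset.range n).powerset ×ˢ (Finset.range n).powerset).filter
    (fun x => x.1.card = i ∧ x.2.card = i ∧ QP σ x.1 x.2)

lemma mem_TP (n : ℕ) (σ : List ℕ) (i : ℕ) (A B : Finset ℕ) : (A, B) ∈ TP n σ i ↔
    (A ⊆ Finset.range n ∧ B ⊆ Finset.range n) ∧ A.card = i ∧ B.card = i ∧ QP σ A B := by
  simp [TP]

lemma AS_sub {n : ℕ} (a : Fin n → ℕ) : AS a ⊆ Finset.range n := by
  intro x hx
  obtain ⟨h, _⟩ := (mem_AS a x).1 hx
  simpa using h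

lemma hVec_eq (n : ℕ) (hn : 0 < n) (σ : List ℕ) (hsum : σ.sum = n) (i : ℕ) :
    hVec n σ i = (TP n σ i).card := by
  have hcA : ∀ a : Fin n → ℕ, (AS a).card = nonzeroCount a := by
    intro a
    simp [AS, nonzeroCount]
  have hcB : ∀ a : Fin n → ℕ, (BS a).card = (AS a).card := by
    intro a
    unfold BS
    rw [Finset.card_image_of_injOn (BS_inj a)]
  have hmem : ∀ a : Fin n → ℕ, memP n σ a ↔ QP σ (AS a) (BS a) := by
    intro a
    unfold memP QP
    refine forall_congr' fun i => forall_congr' fun _ => forall_congr' fun _ => ?_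
    exact key a _ _
  unfold hVec
  rw [← Set.ncard_coe_finset]
  refine Set.ncard_congr (fun a _ => (AS a, BS a)) ?_ ?_ ?_
  · rintro a ⟨h1, h2⟩
    rw [Finset.mem_coe, mem_TP]
    refine ⟨⟨AS_sub a, ?_⟩, by rw [hcA, h2], by rw [hcB, hcA, h2], (hmem a).1 h1⟩
    have hlen : 1 ≤ σ.length := by
      rcases σ with _ | ⟨x, t⟩
      · simp at hsum
        omega
      · simp
    have hFn : FS a n ≤ n := by
      have := h1 σ.length hlen le_rfl
      have e : pSum σ σ.length = n := by simp [pSum, hsum]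
      rw [e] at this
      exact this
    intro x hx
    unfold BS at hx
    rw [Finset.mem_image] at hx
    obtain ⟨l, hl, rfl⟩ := hx
    have h3 := FS_mem a l hl
    have h4 : l < n := by simpa using AS_sub a hl
    have h5 := FS_mono a (show l + 1 ≤ n from h4)
    rw [Finset.mem_range]
    omega
  · intro a b _ _ hab
    simp only [Prod.mk.injEq] at hab
    have hF : ∀ j, FS a j = FS b j := by
      intro j
      apply le_antisymm
      · rw [key, hab.1, hab.2, ← key]
      · rw [key, ← hab.1, ← hab.2, ← key]
    funext j
    have h1 := FS_succ a j j.2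
    have h2 := FS_succ b j j.2
    rw [hF, hF] at h1
    simp only [Fin.eta] at h1 h2
    omega
  · rintro ⟨A, B⟩ hAB
    rw [Finset.mem_coe, mem_TP] at hAB
    obtain ⟨⟨hA, hB⟩, h1, h2, h3⟩ := hAB
    obtain ⟨a, rfl, rfl⟩ := exists_inv n A B hA hB (by omega)
    exact ⟨a, ⟨(hmem a).2 h3, by rw [← hcA, h1]⟩, rfl⟩

lemma cnt_sdiff (A B : Finset ℕ) (p : ℕ) : cnt A p = cnt (A \ B) p + cnt (A ∩ B) p := by
  unfold cnt
  rw [← Finset.card_union_of_disjoint]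
  · congr 1
    ext x
    simp only [Finset.mem_filter, Finset.mem_union, Finset.mem_sdiff, Finset.mem_inter]
    tauto
  · rw [Finset.disjoint_left]
    intro x
    simp only [Finset.mem_filter, Finset.mem_sdiff, Finset.mem_inter]
    tauto

lemma QP_iff (σ : List ℕ) (A B : Finset ℕ) : QP σ A B ↔ QP σ (A \ B) (B \ A) := by
  unfold QP
  refine forall_congr' fun i => forall_congr' fun _ => forall_congr' fun _ => ?_
  rw [cnt_sdiff A B, cnt_sdiff B A, Finset.inter_comm B A]
  omega

lemma choose_mono' (m a b : ℕ) (hab : a ≤ b) (hb : b ≤ m / 2) : m.choose a ≤ m.choose b := by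
  induction b, hab using Nat.le_induction with
  | base => exact le_rfl
  | succ b hab ih => exact (ih (by omega)).trans (Nat.choose_le_succ_of_lt_half_left (by omega))

lemma fiber_card (n : ℕ) (σ : List ℕ) (i : ℕ) (D U : Finset ℕ) (hD : D ⊆ Finset.range n)
    (hU : U ⊆ Finset.range n) (hdis : Disjoint D U) (hc : D.card = U.card) (hQ : QP σ D U)
    (hi : D.card ≤ i) :
    ((TP n σ i).filter (fun x => (x.1 \ x.2, x.2 \ x.1) = (D, U))).card =
      (n - 2 * D.card).choose (i - D.card) := by
  have hcard : (Finset.range n \ (D ∪ U)).card = n - 2 * D.card := by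
    rw [Finset.card_sdiff_of_subset (Finset.union_subset hD hU),
      Finset.card_union_of_disjoint hdis, Finset.card_range]
    omega
  rw [← hcard, ← Finset.card_powersetCard]
  rw [Finset.disjoint_left] at hdis
  symm
  refine Finset.card_bij' (fun C _ => (D ∪ C, U ∪ C)) (fun x _ => x.1 ∩ x.2) ?_ ?_ ?_ ?_
  · intro C hC
    rw [Finset.mem_powersetCard] at hC
    obtain ⟨hC1, hC2⟩ := hC
    have hx : ∀ x ∈ C, x ∈ Finset.range n ∧ x ∉ D ∧ x ∉ U := by
      intro x hx
      have := hC1 hx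
      simp only [Finset.mem_sdiff, Finset.mem_union] at this
      tauto
    have e1 : (D ∪ C) \ (U ∪ C) = D := by
      ext x
      have := hx x
      have := @hdis x
      simp only [Finset.mem_sdiff, Finset.mem_union]
      tauto
    have e2 : (U ∪ C) \ (D ∪ C) = U := by
      ext x
      have := hx x
      have := @hdis x
      simp only [Finset.mem_sdiff, Finset.mem_union]
      tauto
    rw [Finset.mem_filter, mem_TP, QP_iff, e1, e2]
    have hCn : C ⊆ Finset.range n := fun x h => (hx x h).1
    refine ⟨⟨⟨Finset.union_subset hD hCn, Finset.union_subset hU hCn⟩, ?_, ?_, hQ⟩, rfl⟩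
    · rw [Finset.card_union_of_disjoint, hC2]
      · omega
      · rw [Finset.disjoint_right]
        exact fun x h => (hx x h).2.1
    · rw [Finset.card_union_of_disjoint, hC2]
      · omega
      · rw [Finset.disjoint_right]
        exact fun x h => (hx x h).2.2
  · rintro ⟨A, B⟩ hx
    rw [Finset.mem_filter, mem_TP] at hx
    obtain ⟨⟨⟨hA, hB⟩, h1, h2, -⟩, h3⟩ := hx
    simp only [Prod.mk.injEq] at h3
    obtain ⟨rfl, rfl⟩ := h3
    rw [Finset.mem_powersetCard]
    constructor
    · intro x hx
      simp only [Finset.mem_inter] at hx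
      have := hA hx.1
      simp only [Finset.mem_sdiff, Finset.mem_union]
      tauto
    · have := Finset.card_sdiff_add_card_inter A B
      simp only
      omega
  · intro C hC
    rw [Finset.mem_powersetCard] at hC
    ext x
    have := @hC.1 x
    have := @hdis x
    simp only [Finset.mem_sdiff, Finset.mem_union, Finset.mem_inter] at *
    tauto
  · rintro ⟨A, B⟩ hx
    rw [Finset.mem_filter, mem_TP] at hx
    have h3 := hx.2
    simp only [Prod.mk.injEq] at h3
    obtain ⟨rfl, rfl⟩ := h3
    simp only [Prod.mk.injEq]
    constructor <;> ext x <;> simp only [Finset.mem_sdiff, Finset.mem_union, Finset.mem_inter] <;>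
      tauto

lemma TP_mono (n : ℕ) (σ : List ℕ) (i j : ℕ) (hij : i ≤ j) (hj : j ≤ n / 2) :
    (TP n σ i).card ≤ (TP n σ j).card := by
  have hm : ∀ i, ∀ x ∈ TP n σ i, (x.1 \ x.2, x.2 \ x.1) ∈
      (Finset.range n).powerset ×ˢ (Finset.range n).powerset := by
    rintro i ⟨A, B⟩ hx
    rw [mem_TP] at hx
    simp only [Finset.mem_product, Finset.mem_powerset]
    exact ⟨Finset.sdiff_subset.trans hx.1.1, Finset.sdiff_subset.trans hx.1.2⟩
  rw [Finset.card_eq_sum_card_fiberwise (hm i), Finset.card_eq_sum_card_fiberwise (hm j)]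
  apply Finset.sum_le_sum
  rintro ⟨D, U⟩ _
  rcases Finset.eq_empty_or_nonempty
    ((TP n σ i).filter (fun x => (x.1 \ x.2, x.2 \ x.1) = (D, U))) with h | ⟨⟨A, B⟩, h⟩
  · rw [h]
    simp
  · rw [Finset.mem_filter, mem_TP] at h
    obtain ⟨⟨⟨hA, hB⟩, h1, h2, hQ⟩, h3⟩ := h
    simp only [Prod.mk.injEq] at h3
    obtain ⟨rfl, rfl⟩ := h3
    have hD : A \ B ⊆ Finset.range n := Finset.sdiff_subset.trans hA
    have hU : B \ A ⊆ Finset.range n := Finset.sdiff_subset.trans hB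
    have hdis : Disjoint (A \ B) (B \ A) := disjoint_sdiff_sdiff
    have e1 := Finset.card_sdiff_add_card_inter A B
    have e2 := Finset.card_sdiff_add_card_inter B A
    rw [Finset.inter_comm] at e2
    have hc : (A \ B).card = (B \ A).card := by omega
    rw [fiber_card n σ i _ _ hD hU hdis hc ((QP_iff σ A B).1 hQ) (by omega),
      fiber_card n σ j _ _ hD hU hdis hc ((QP_iff σ A B).1 hQ) (by omega)]
    exact choose_mono' _ _ _ (by omega) (by omega)

/-- The vector `(h_0(σ), …, h_n(σ))` is unimodal:
`h_0(σ) ≤ h_1(σ) ≤ ⋯ ≤ h_{⌊n/2⌋}(σ)`. -/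
theorem hVec_unimodal (n : ℕ) (hn : 0 < n) (σ : List ℕ)
    (hpos : ∀ r ∈ σ, 0 < r) (hsum : σ.sum = n) :
    ∀ i j, i ≤ j → j ≤ n / 2 → hVec n σ i ≤ hVec n σ j := by
  intro i j hij hj
  rw [hVec_eq n hn σ hsum, hVec_eq n hn σ hsum]
  exact TP_mono n σ i j hij hj
end

section
/- Let σ = (r_1,...,r_k) be a composition of a positive integer n. For 0 ≤ i ≤ ⌊n/2⌋, define γ_i(σ) to be the number of elements x ∈ H_σ such that S(x) ∩ T(x) = ∅ and #S(x) = i. Then Σ_{i=0}^{n} h_i(σ) t^i = Σ_{i=0}^{⌊n/2⌋} γ_i(σ) t^i (1+t)^{n-2i} as polynomials in t. -/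
open Finset Polynomial

/-- Membership in `H_σ`: the nonzero entries appear in strictly increasing order
from left to right, and `p₁, …, p_{s_i} ≤ s_i` for every `i ∈ [k]`. -/
def memH (n : ℕ) (σ : List ℕ) (p : Fin n → ℕ) : Prop :=
  (∀ j j' : Fin n, j < j' → p j ≠ 0 → p j' ≠ 0 → p j < p j') ∧
  (∀ i, 1 ≤ i → i ≤ σ.length → ∀ j : Fin n, (j : ℕ) < pSum σ i → p j ≤ pSum σ i)

/-- `S(x)`: the set of (1-indexed) positions of the nonzero entries of `x`. -/
def Spos {n : ℕ} (p : Fin n → ℕ) : Finset ℕ :=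
  (Finset.univ.filter (fun j : Fin n => p j ≠ 0)).image (fun j : Fin n => (j : ℕ) + 1)

/-- `T(x)`: the set of nonzero entries of `x`. -/
def Tset {n : ℕ} (p : Fin n → ℕ) : Finset ℕ :=
  (Finset.univ.filter (fun j : Fin n => p j ≠ 0)).image p

/-- The partial sup of the first `m` entries. -/
def psup {n : ℕ} (p : Fin n → ℕ) (m : ℕ) : ℕ :=
  (Finset.univ.filter (fun j : Fin n => (j : ℕ) < m)).sup p

/-- The partial sum of the first `m` entries. -/
def psm {n : ℕ} (p : Fin n → ℕ) (m : ℕ) : ℕ :=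
  ∑ j ∈ Finset.univ.filter (fun j : Fin n => (j : ℕ) < m), p j

/-- Nonzero entries increase. -/
def Incr {n : ℕ} (p : Fin n → ℕ) : Prop :=
  ∀ j j' : Fin n, j < j' → p j ≠ 0 → p j' ≠ 0 → p j < p j'

lemma filter_succ {n : ℕ} (m : ℕ) (hm : m < n) :
    (Finset.univ.filter (fun j : Fin n => (j : ℕ) < m + 1)) =
      insert ⟨m, hm⟩ (Finset.univ.filter (fun j : Fin n => (j : ℕ) < m)) := by
  ext j
  simp only [mem_filter, mem_univ, true_and, mem_insert, Fin.ext_iff]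
  omega

lemma filter_succ_ge {n : ℕ} (m : ℕ) (hm : ¬ m < n) :
    (Finset.univ.filter (fun j : Fin n => (j : ℕ) < m + 1)) =
      (Finset.univ.filter (fun j : Fin n => (j : ℕ) < m)) := by
  ext j
  simp only [mem_filter, mem_univ, true_and]
  omega

lemma psup_succ {n : ℕ} (p : Fin n → ℕ) (j : Fin n) :
    psup p (j + 1) = max (p j) (psup p j) := by
  unfold psup
  rw [filter_succ _ j.2, Finset.sup_insert]

lemma psm_succ {n : ℕ} (p : Fin n → ℕ) (j : Fin n) :
    psm p (j + 1) = p j + psm p j := by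
  unfold psm
  rw [filter_succ _ j.2, Finset.sum_insert]
  simp

lemma psup_lt {n : ℕ} (p : Fin n → ℕ) (hp : Incr p) (j : Fin n) (h : p j ≠ 0) :
    psup p j < p j := by
  unfold psup
  rw [Finset.sup_lt_iff (by simpa using Nat.pos_of_ne_zero h)]
  intro b hb
  simp only [mem_filter, mem_univ, true_and] at hb
  by_cases hb0 : p b = 0
  · omega
  · exact hp b j hb hb0 h

/-- differences -/
def toA {n : ℕ} (p : Fin n → ℕ) : Fin n → ℕ := fun j => p j - psup p j

lemma toA_eq_zero {n : ℕ} (p : Fin n → ℕ) (hp : Incr p) (j : Fin n) :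
    toA p j = 0 ↔ p j = 0 := by
  unfold toA
  by_cases h : p j = 0
  · simp [h]
  · have := psup_lt p hp j h
    omega

lemma psm_toA {n : ℕ} (p : Fin n → ℕ) (m : ℕ) : psm (toA p) m = psup p m := by
  induction m with
  | zero => simp [psm, psup]
  | succ m ih =>
    by_cases hm : m < n
    · have h1 := psm_succ (toA p) ⟨m, hm⟩
      have h2 := psup_succ p ⟨m, hm⟩
      simp only [toA] at h1 h2 ih ⊢
      rw [h1, h2, ih]
      omega
    · unfold psm psup at *
      rw [filter_succ_ge _ hm, ih]

/-- partial sums -/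
def toH {n : ℕ} (a : Fin n → ℕ) : Fin n → ℕ := fun j => if a j = 0 then 0 else psm a (j + 1)

lemma psm_mono {n : ℕ} (a : Fin n → ℕ) {m m' : ℕ} (h : m ≤ m') : psm a m ≤ psm a m' := by
  unfold psm
  apply Finset.sum_le_sum_of_subset
  intro j
  simp only [mem_filter, mem_univ, true_and]
  omega

lemma toH_incr {n : ℕ} (a : Fin n → ℕ) : Incr (toH a) := by
  intro j j' hj h h'
  unfold toH at *
  split_ifs at * with h1 h2
  · simp at *
  · simp at *
  · simp at *
  · rw [psm_succ a j']
    have := psm_mono a (show (j : ℕ) + 1 ≤ j' from hj)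
    omega

lemma psup_toH {n : ℕ} (a : Fin n → ℕ) (m : ℕ) : psup (toH a) m = psm a m := by
  induction m with
  | zero => simp [psm, psup]
  | succ m ih =>
    by_cases hm : m < n
    · have h1 := psm_succ a ⟨m, hm⟩
      have h2 := psup_succ (toH a) ⟨m, hm⟩
      simp only [] at h1 h2
      rw [h2, ih]
      simp only [toH]
      rw [h1]
      split_ifs with h
      · omega
      · omega
    · unfold psm psup at *
      rw [filter_succ_ge _ hm, ih]

lemma toA_toH {n : ℕ} (a : Fin n → ℕ) : toA (toH a) = a := by
  ext j
  unfold toA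
  rw [psup_toH]
  unfold toH
  have := psm_succ a j
  split_ifs <;> omega

lemma toH_toA {n : ℕ} (p : Fin n → ℕ) (hp : Incr p) : toH (toA p) = p := by
  ext j
  have := toA_eq_zero p hp j
  unfold toH
  rw [psm_toA, psup_succ]
  split_ifs with h
  · exact (this.1 h).symm
  · have := psup_lt p hp j (fun h' => h (this.2 h'))
    omega

lemma memH_iff {n : ℕ} (σ : List ℕ) (p : Fin n → ℕ) :
    memH n σ p ↔ Incr p ∧ ∀ i, 1 ≤ i → i ≤ σ.length → psup p (pSum σ i) ≤ pSum σ i := by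
  unfold memH Incr psup
  simp [Finset.sup_le_iff]

lemma memP_iff {n : ℕ} (σ : List ℕ) (p : Fin n → ℕ) :
    memP n σ p ↔ ∀ i, 1 ≤ i → i ≤ σ.length → psm p (pSum σ i) ≤ pSum σ i := Iff.rfl

lemma Spos_card {n : ℕ} (p : Fin n → ℕ) : (Spos p).card = nonzeroCount p := by
  unfold Spos nonzeroCount
  rw [Finset.card_image_of_injective]
  intro a b h
  simpa [Fin.ext_iff] using h

lemma hVec_eq_s5 (n : ℕ) (σ : List ℕ) (i : ℕ) :
    hVec n σ i = {x : Fin n → ℕ | memH n σ x ∧ (Spos x).card = i}.ncard := by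
  unfold hVec
  symm
  refine Set.ncard_congr (fun x _ => toA x) ?_ ?_ ?_
  · rintro x ⟨hx, hc⟩
    rw [memH_iff] at hx
    refine ⟨?_, ?_⟩
    · rw [memP_iff]
      simpa only [psm_toA] using hx.2
    · rw [← hc, Spos_card]
      simp only [nonzeroCount, ne_eq, toA_eq_zero x hx.1]
  · rintro x y ⟨hx, _⟩ ⟨hy, _⟩ h
    rw [← toH_toA x hx.1, ← toH_toA y hy.1, h]
  · rintro a ⟨ha, hc⟩
    refine ⟨toH a, ⟨?_, ?_⟩, toA_toH a⟩
    · rw [memH_iff]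
      refine ⟨toH_incr a, ?_⟩
      simpa only [psup_toH] using (memP_iff σ a).1 ha
    · rw [← hc, Spos_card]
      have := toA_eq_zero (toH a) (toH_incr a)
      simp only [nonzeroCount, ne_eq, ← this, toA_toH]

/-! Pairs -/

/-- number of elements of `S` at most `m` -/
def cle (S : Finset ℕ) (m : ℕ) : ℕ := (S.filter (· ≤ m)).card

lemma count_eq (S : Finset ℕ) (m : ℕ) : Nat.count (· ∈ S) m = (S.filter (· < m)).card := by
  rw [Nat.count_eq_card_filter_range]
  congr 1
  ext x
  simp [and_comm]

lemma count_succ_eq (S : Finset ℕ) (m : ℕ) : Nat.count (· ∈ S) (m + 1) = cle S m := by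
  rw [count_eq]
  unfold cle
  simp only [Nat.lt_succ_iff]

/-- good pairs -/
def Good (n : ℕ) (σ : List ℕ) (q : Finset ℕ × Finset ℕ) : Prop :=
  q.1 ⊆ Icc 1 n ∧ q.2 ⊆ Icc 1 n ∧ q.1.card = q.2.card ∧
    ∀ i, 1 ≤ i → i ≤ σ.length → cle q.1 (pSum σ i) ≤ cle q.2 (pSum σ i)

lemma mem_Spos {n : ℕ} (p : Fin n → ℕ) (j : Fin n) : (j : ℕ) + 1 ∈ Spos p ↔ p j ≠ 0 := by
  unfold Spos
  simp only [mem_image, mem_filter, mem_univ, true_and]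
  constructor
  · rintro ⟨a, ha, h⟩
    have : a = j := by ext; omega
    rwa [← this]
  · intro h
    exact ⟨j, h, rfl⟩

lemma Tset_count {n : ℕ} (p : Fin n → ℕ) (hp : Incr p) (j : Fin n) (h : p j ≠ 0) :
    Nat.count (· ∈ Tset p) (p j) = Nat.count (· ∈ Spos p) (j + 1) := by
  rw [count_eq, count_eq]
  have e1 : (Tset p).filter (· < p j) =
      (univ.filter (fun k : Fin n => p k ≠ 0 ∧ k < j)).image p := by
    ext t
    simp only [Tset, mem_filter, mem_image, mem_univ, true_and]
    constructor
    · rintro ⟨⟨k, hk, rfl⟩, hlt⟩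
      refine ⟨k, ⟨hk, ?_⟩, rfl⟩
      by_contra hc
      rcases eq_or_lt_of_le (not_lt.1 hc) with h1 | h1
      · subst h1; omega
      · have := hp j k h1 h hk
        omega
    · rintro ⟨k, ⟨hk, hlt⟩, rfl⟩
      exact ⟨⟨k, hk, rfl⟩, hp k j hlt hk h⟩
  have e2 : (Spos p).filter (· < (j : ℕ) + 1) =
      (univ.filter (fun k : Fin n => p k ≠ 0 ∧ k < j)).image (fun k : Fin n => (k : ℕ) + 1) := by
    ext t
    simp only [Spos, mem_filter, mem_image, mem_univ, true_and]
    constructor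
    · rintro ⟨⟨k, hk, rfl⟩, hlt⟩
      exact ⟨k, ⟨hk, by rw [Fin.lt_def]; omega⟩, rfl⟩
    · rintro ⟨k, ⟨hk, hlt⟩, rfl⟩
      rw [Fin.lt_def] at hlt
      exact ⟨⟨k, hk, rfl⟩, by omega⟩
  rw [e1, e2, Finset.card_image_of_injOn, Finset.card_image_of_injOn]
  · intro a _ b _ hab
    simpa [Fin.ext_iff] using hab
  · intro a ha b hb hab
    simp only [coe_filter, mem_univ, true_and, Set.mem_ofPred_eq] at ha hb
    rcases lt_trichotomy a b with hl | hl | hl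
    · have := hp a b hl ha.1 hb.1; omega
    · exact hl
    · have := hp b a hl hb.1 ha.1; omega

lemma mem_Tset {n : ℕ} (p : Fin n → ℕ) (j : Fin n) (h : p j ≠ 0) : p j ∈ Tset p := by
  unfold Tset
  exact mem_image_of_mem _ (by simpa using h)

lemma Tset_card {n : ℕ} (p : Fin n → ℕ) (hp : Incr p) : (Tset p).card = (Spos p).card := by
  rw [Spos_card]
  unfold Tset nonzeroCount
  apply Finset.card_image_of_injOn
  intro a ha b hb hab
  simp only [coe_filter, mem_univ, true_and, Set.mem_ofPred_eq] at ha hb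
  rcases lt_trichotomy a b with hl | hl | hl
  · have := hp a b hl ha hb; omega
  · exact hl
  · have := hp b a hl hb ha; omega

lemma cle_iff {n : ℕ} (p : Fin n → ℕ) (hp : Incr p) (m : ℕ) :
    cle (Spos p) m ≤ cle (Tset p) m ↔ ∀ j : Fin n, (j : ℕ) < m → p j ≤ m := by
  constructor
  · intro h j hj
    by_contra hc
    have h0 : p j ≠ 0 := by omega
    have e := Tset_count p hp j h0
    have e1 : Nat.count (· ∈ Tset p) (m + 1) ≤ Nat.count (· ∈ Tset p) (p j) :=
      Nat.count_monotone _ (by omega)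
    have e2 : Nat.count (· ∈ Spos p) (j + 1 + 1) ≤ Nat.count (· ∈ Spos p) (m + 1) :=
      Nat.count_monotone _ (by omega)
    rw [Nat.count_succ (· ∈ Spos p) (j + 1), if_pos ((mem_Spos p j).2 h0)] at e2
    rw [count_succ_eq _ m] at e1 e2
    omega
  · intro h
    unfold cle
    have e2 : (Spos p).filter (· ≤ m) =
        (univ.filter (fun k : Fin n => p k ≠ 0 ∧ (k : ℕ) < m)).image (fun k : Fin n => (k : ℕ) + 1) := by
      ext t
      simp only [Spos, mem_filter, mem_image, mem_univ, true_and]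
      constructor
      · rintro ⟨⟨k, hk, rfl⟩, hlt⟩
        exact ⟨k, ⟨hk, by omega⟩, rfl⟩
      · rintro ⟨k, ⟨hk, hlt⟩, rfl⟩
        exact ⟨⟨k, hk, rfl⟩, by omega⟩
    rw [e2]
    refine Finset.card_image_le.trans ?_
    apply Finset.card_le_card_of_injOn p
    · intro k hk
      simp only [coe_filter, mem_univ, true_and, Set.mem_ofPred_eq] at hk ⊢
      exact ⟨mem_Tset p k hk.1, h k hk.2⟩
    · intro a ha b hb hab
      simp only [coe_filter, mem_univ, true_and, Set.mem_ofPred_eq] at ha hb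
      rcases lt_trichotomy a b with hl | hl | hl
      · have := hp a b hl ha.1 hb.1; omega
      · exact hl
      · have := hp b a hl hb.1 ha.1; omega

lemma Spos_sub {n : ℕ} (p : Fin n → ℕ) : Spos p ⊆ Icc 1 n := by
  intro t
  simp only [Spos, mem_image, mem_filter, mem_univ, true_and, mem_Icc]
  rintro ⟨k, _, rfl⟩
  omega

lemma good_of_memH {n : ℕ} (hn : 0 < n) (σ : List ℕ) (hsum : σ.sum = n) (p : Fin n → ℕ)
    (hp : memH n σ p) : Good n σ (Spos p, Tset p) := by
  refine ⟨Spos_sub p, ?_, (Tset_card p hp.1).symm, ?_⟩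
  · intro t
    simp only [Tset, mem_image, mem_filter, mem_univ, true_and, mem_Icc]
    rintro ⟨k, hk, rfl⟩
    have hl : 1 ≤ σ.length := by
      rcases σ with _ | ⟨a, l⟩
      · simp at hsum; omega
      · simp
    have := hp.2 σ.length hl le_rfl k
    simp only [pSum, List.take_length, hsum] at this
    have := this k.2
    omega
  · intro i h1 h2
    exact (cle_iff p hp.1 _).2 (hp.2 i h1 h2)

/-- inverse -/
noncomputable def ofPair (n : ℕ) (q : Finset ℕ × Finset ℕ) : Fin n → ℕ := fun j =>
  if (j : ℕ) + 1 ∈ q.1 then Nat.nth (· ∈ q.2) (Nat.count (· ∈ q.1) (j + 1)) else 0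

lemma ofPair_pair {n : ℕ} (p : Fin n → ℕ) (hp : Incr p) : ofPair n (Spos p, Tset p) = p := by
  ext j
  unfold ofPair
  simp only [mem_Spos]
  split_ifs with h
  · rw [← Tset_count p hp j h]
    exact Nat.nth_count (p := (· ∈ Tset p)) (mem_Tset p j h)
  · simpa using (not_not.1 h).symm

lemma count_lt_card (S : Finset ℕ) (s : ℕ) (h : s ∈ S) : Nat.count (· ∈ S) s < S.card := by
  rw [count_eq]
  apply Finset.card_lt_card
  rw [Finset.ssubset_iff_of_subset (filter_subset _ _)]
  exact ⟨s, h, by simp⟩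

lemma nth_mem_fin (S : Finset ℕ) (k : ℕ) (h : k < S.card) : Nat.nth (· ∈ S) k ∈ S := by
  refine Nat.nth_mem (p := (· ∈ S)) k (fun hf => ?_)
  have : hf.toFinset = S := by ext; simp
  rwa [this]

lemma count_nth_fin (S : Finset ℕ) (k : ℕ) (h : k < S.card) :
    Nat.count (· ∈ S) (Nat.nth (· ∈ S) k) = k := by
  refine Nat.count_nth (p := (· ∈ S)) (fun hf => ?_)
  have : hf.toFinset = S := by ext; simp
  rwa [this]

lemma ofPair_mem {n : ℕ} (q : Finset ℕ × Finset ℕ) (hc : q.1.card = q.2.card) (j : Fin n)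
    (h : (j : ℕ) + 1 ∈ q.1) : ofPair n q j ∈ q.2 := by
  unfold ofPair
  rw [if_pos h]
  apply nth_mem_fin
  rw [← hc]
  exact count_lt_card _ _ h

lemma ofPair_ne {n : ℕ} (q : Finset ℕ × Finset ℕ) (hc : q.1.card = q.2.card)
    (hT : q.2 ⊆ Icc 1 n) (j : Fin n) : ofPair n q j ≠ 0 ↔ (j : ℕ) + 1 ∈ q.1 := by
  constructor
  · intro h
    by_contra h'
    simp [ofPair, h'] at h
  · intro h
    have := mem_Icc.1 (hT (ofPair_mem q hc j h))
    omega

lemma ofPair_incr {n : ℕ} (q : Finset ℕ × Finset ℕ) (hc : q.1.card = q.2.card)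
    (hT : q.2 ⊆ Icc 1 n) : Incr (ofPair n q) := by
  intro j j' hj h h'
  rw [ofPair_ne q hc hT] at h h'
  unfold ofPair
  rw [if_pos h, if_pos h']
  refine Nat.nth_lt_nth' (p := (· ∈ q.2)) ?_ (fun hf => ?_)
  · apply Nat.count_strict_mono h
    rw [Fin.lt_def] at hj
    omega
  · have : hf.toFinset = q.2 := by ext; simp
    rw [this, ← hc]
    exact count_lt_card _ _ h'

lemma Spos_ofPair {n : ℕ} (q : Finset ℕ × Finset ℕ) (hc : q.1.card = q.2.card)
    (hS : q.1 ⊆ Icc 1 n) (hT : q.2 ⊆ Icc 1 n) : Spos (ofPair n q) = q.1 := by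
  ext t
  constructor
  · intro h
    have := mem_Icc.1 (Spos_sub _ h)
    have e := mem_Spos (ofPair n q) ⟨t - 1, by omega⟩
    rw [ofPair_ne q hc hT] at e
    simp only [Nat.sub_add_cancel this.1] at e
    exact e.1 h
  · intro h
    have := mem_Icc.1 (hS h)
    have e := mem_Spos (ofPair n q) ⟨t - 1, by omega⟩
    rw [ofPair_ne q hc hT] at e
    simp only [Nat.sub_add_cancel this.1] at e
    exact e.2 h

lemma Tset_ofPair {n : ℕ} (q : Finset ℕ × Finset ℕ) (hc : q.1.card = q.2.card)
    (hS : q.1 ⊆ Icc 1 n) (hT : q.2 ⊆ Icc 1 n) : Tset (ofPair n q) = q.2 := by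
  apply Finset.eq_of_subset_of_card_le
  · intro t
    simp only [Tset, mem_image, mem_filter, mem_univ, true_and]
    rintro ⟨k, hk, rfl⟩
    exact ofPair_mem q hc k ((ofPair_ne q hc hT k).1 hk)
  · rw [Tset_card _ (ofPair_incr q hc hT), Spos_ofPair q hc hS hT, hc]

lemma ofPair_memH {n : ℕ} (σ : List ℕ) (q : Finset ℕ × Finset ℕ) (hq : Good n σ q) :
    memH n σ (ofPair n q) := by
  obtain ⟨hS, hT, hc, h⟩ := hq
  refine ⟨ofPair_incr q hc hT, fun i h1 h2 => ?_⟩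
  rw [← cle_iff _ (ofPair_incr q hc hT), Spos_ofPair q hc hS hT, Tset_ofPair q hc hS hT]
  exact h i h1 h2

open Classical in
/-- finset of good pairs -/
noncomputable def GoodF (n : ℕ) (σ : List ℕ) : Finset (Finset ℕ × Finset ℕ) :=
  ((Icc 1 n).powerset ×ˢ (Icc 1 n).powerset).filter (Good n σ)

lemma mem_GoodF (n : ℕ) (σ : List ℕ) (q : Finset ℕ × Finset ℕ) :
    q ∈ GoodF n σ ↔ Good n σ q := by
  unfold GoodF
  simp only [mem_filter, mem_product, mem_powerset, and_iff_right_iff_imp]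
  intro h
  exact ⟨h.1, h.2.1⟩

lemma ncard_pairs {n : ℕ} (hn : 0 < n) (σ : List ℕ) (hsum : σ.sum = n)
    (R : Finset ℕ × Finset ℕ → Prop) [DecidablePred R] :
    {x : Fin n → ℕ | memH n σ x ∧ R (Spos x, Tset x)}.ncard = ((GoodF n σ).filter R).card := by
  rw [← Set.ncard_coe_finset]
  refine Set.ncard_congr (fun x _ => (Spos x, Tset x)) ?_ ?_ ?_
  · rintro x ⟨hx, hc⟩
    simp only [coe_filter, Set.mem_ofPred_eq, mem_GoodF]
    exact ⟨good_of_memH hn σ hsum x hx, hc⟩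
  · rintro x y ⟨hx, _⟩ ⟨hy, _⟩ h
    rw [← ofPair_pair x hx.1, ← ofPair_pair y hy.1]
    exact congrArg (ofPair n) h
  · rintro q hq
    simp only [coe_filter, Set.mem_ofPred_eq, mem_GoodF] at hq
    obtain ⟨hq, hR⟩ := hq
    have e : (Spos (ofPair n q), Tset (ofPair n q)) = q := by
      rw [Spos_ofPair q hq.2.2.1 hq.1 hq.2.1, Tset_ofPair q hq.2.2.1 hq.1 hq.2.1]
    exact ⟨ofPair n q, ⟨ofPair_memH σ q hq, by rwa [e]⟩, e⟩

lemma cle_union (A C : Finset ℕ) (h : Disjoint A C) (m : ℕ) :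
    cle (A ∪ C) m = cle A m + cle C m := by
  unfold cle
  rw [filter_union, card_union_of_disjoint (disjoint_filter_filter h)]

lemma good_union (n : ℕ) (σ : List ℕ) (A B C : Finset ℕ) (hA : Disjoint A C) (hB : Disjoint B C)
    (hC : C ⊆ Icc 1 n) : Good n σ (A ∪ C, B ∪ C) ↔ Good n σ (A, B) := by
  unfold Good
  simp only [cle_union _ _ hA, cle_union _ _ hB, card_union_of_disjoint hA,
    card_union_of_disjoint hB, union_subset_iff, hC, and_true, Nat.add_right_cancel_iff,
    Nat.add_le_add_iff_right]

lemma key_s5 (n : ℕ) (σ : List ℕ) :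
    (∑ q ∈ GoodF n σ, X ^ q.1.card : Polynomial ℕ) =
      ∑ q ∈ (GoodF n σ).filter (fun q => q.1 ∩ q.2 = ∅),
        X ^ q.1.card * (1 + X) ^ (n - 2 * q.1.card) := by
  have h : ∀ q ∈ (GoodF n σ).filter (fun q => q.1 ∩ q.2 = ∅),
      (X ^ q.1.card * (1 + X) ^ (n - 2 * q.1.card) : Polynomial ℕ) =
        ∑ C ∈ (Icc 1 n \ (q.1 ∪ q.2)).powerset, X ^ (q.1.card + C.card) := by
    intro q hq
    rw [mem_filter, mem_GoodF] at hq
    obtain ⟨⟨hS, hT, hc, -⟩, hd⟩ := hq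
    have hcard : (Icc 1 n \ (q.1 ∪ q.2)).card = n - 2 * q.1.card := by
      rw [card_sdiff_of_subset (union_subset hS hT),
        card_union_of_disjoint (disjoint_iff_inter_eq_empty.2 hd), Nat.card_Icc]
      omega
    rw [← hcard, add_comm (1 : Polynomial ℕ) X, ← Finset.sum_pow_mul_eq_add_pow, Finset.mul_sum]
    simp [pow_add]
  rw [Finset.sum_congr rfl h, Finset.sum_sigma']
  symm
  refine Finset.sum_bij' (fun x _ => (x.1.1 ∪ x.2, x.1.2 ∪ x.2))
    (fun q _ => ⟨(q.1 \ q.2, q.2 \ q.1), q.1 ∩ q.2⟩) ?_ ?_ ?_ ?_ ?_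
  · rintro ⟨⟨A, B⟩, C⟩ hx
    simp only [mem_sigma, mem_filter, mem_GoodF, mem_powerset] at hx ⊢
    obtain ⟨⟨hg, hd⟩, hC⟩ := hx
    rw [subset_sdiff, disjoint_union_right] at hC
    exact (good_union n σ A B C hC.2.1.symm hC.2.2.symm hC.1).2 hg
  · rintro ⟨S, T⟩ hq
    simp only [mem_sigma, mem_filter, mem_GoodF, mem_powerset] at hq ⊢
    have hC : S ∩ T ⊆ Icc 1 n := inter_subset_left.trans hq.1
    refine ⟨⟨?_, ?_⟩, ?_⟩
    · rw [← good_union n σ _ _ (S ∩ T) _ _ hC]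
      · have e1 : S \ T ∪ S ∩ T = S := by ext; simp; tauto
        have e2 : T \ S ∪ S ∩ T = T := by ext; simp; tauto
        rwa [e1, e2]
      · rw [disjoint_left]; simp; tauto
      · rw [disjoint_left]; simp; tauto
    · ext; simp; tauto
    · intro x hx
      have := hC hx
      simp only [mem_sdiff, mem_union, mem_inter] at *
      tauto
  · rintro ⟨⟨A, B⟩, C⟩ hx
    simp only [mem_sigma, mem_filter, mem_GoodF, mem_powerset] at hx
    obtain ⟨⟨hg, hd⟩, hC⟩ := hx
    rw [subset_sdiff, disjoint_union_right] at hC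
    have d1 := disjoint_left.1 hC.2.1
    have d2 := disjoint_left.1 hC.2.2
    have d3 := disjoint_left.1 (disjoint_iff_inter_eq_empty.2 hd)
    have e1 : (A ∪ C) \ (B ∪ C) = A := by
      ext x; have := @d1 x; have := @d2 x; have := @d3 x; simp; tauto
    have e2 : (B ∪ C) \ (A ∪ C) = B := by
      ext x; have := @d1 x; have := @d2 x; have := @d3 x; simp; tauto
    have e3 : (A ∪ C) ∩ (B ∪ C) = C := by
      ext x; have := @d1 x; have := @d2 x; have := @d3 x; simp; tauto
    simp only [e1, e2, e3]
  · rintro ⟨S, T⟩ hq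
    have e1 : S \ T ∪ S ∩ T = S := by ext; simp; tauto
    have e2 : T \ S ∪ S ∩ T = T := by ext; simp; tauto
    simp only [e1, e2]
  · rintro ⟨⟨A, B⟩, C⟩ hx
    simp only [mem_sigma, mem_filter, mem_GoodF, mem_powerset] at hx
    obtain ⟨⟨hg, hd⟩, hC⟩ := hx
    rw [subset_sdiff, disjoint_union_right] at hC
    simp only [card_union_of_disjoint hC.2.1.symm]

/-- The gamma-expansion of `h(σ,t)`, where `γ_i(σ)` counts the elements
`x ∈ H_σ` with `S(x) ∩ T(x) = ∅` and `#S(x) = i`. -/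
theorem hPoly_gamma_expansion (n : ℕ) (hn : 0 < n) (σ : List ℕ)
    (hpos : ∀ r ∈ σ, 0 < r) (hsum : σ.sum = n) :
    (∑ i ∈ Finset.range (n + 1), Polynomial.C (hVec n σ i) * X ^ i : Polynomial ℕ) =
      ∑ i ∈ Finset.range (n / 2 + 1),
        Polynomial.C ({x : Fin n → ℕ |
            memH n σ x ∧ Spos x ∩ Tset x = ∅ ∧ (Spos x).card = i}.ncard) *
          X ^ i * (1 + X) ^ (n - 2 * i) := by
  have h1 : ∀ i, hVec n σ i = ((GoodF n σ).filter (fun q => q.1.card = i)).card := by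
    intro i
    rw [hVec_eq_s5, ← ncard_pairs hn σ hsum]
  have h2 : ∀ i, {x : Fin n → ℕ |
            memH n σ x ∧ Spos x ∩ Tset x = ∅ ∧ (Spos x).card = i}.ncard =
      (((GoodF n σ).filter (fun q => q.1 ∩ q.2 = ∅)).filter (fun q => q.1.card = i)).card := by
    intro i
    rw [Finset.filter_filter, ← ncard_pairs hn σ hsum]
  simp only [h1, h2]
  have h3 := key_s5 n σ
  rw [← Finset.sum_fiberwise_of_maps_to (s := GoodF n σ) (t := range (n + 1))
    (g := fun q => q.1.card), ← Finset.sum_fiberwise_of_maps_to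
    (s := (GoodF n σ).filter (fun q => q.1 ∩ q.2 = ∅)) (t := range (n / 2 + 1))
    (g := fun q => q.1.card)] at h3
  · convert h3 using 2 with i hi i hi
    · rw [Finset.sum_congr rfl (g := fun _ => (X ^ i : Polynomial ℕ))]
      · simp
      · intro q hq
        rw [(mem_filter.1 hq).2]
    · rw [Finset.sum_congr rfl (g := fun _ => (X ^ i * (1 + X) ^ (n - 2 * i) : Polynomial ℕ))]
      · simp [mul_assoc]
      · intro q hq
        rw [(mem_filter.1 hq).2]
  · intro q hq
    rw [mem_filter, mem_GoodF] at hq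
    obtain ⟨⟨hS, hT, hc, -⟩, hd⟩ := hq
    have := card_le_card (union_subset hS hT)
    rw [card_union_of_disjoint (disjoint_iff_inter_eq_empty.2 hd), Nat.card_Icc] at this
    simp only [mem_range]
    omega
  · intro q hq
    rw [mem_GoodF] at hq
    have := card_le_card hq.1
    rw [Nat.card_Icc] at this
    simp only [mem_range]
    omega
end

section
/- Let σ = (r_1,...,r_k) be a composition of a positive integer n with partial sums s_i. For every m ∈ ℕ, the number of points (a_1,...,a_n) ∈ ℕ^n with a_1 + ... + a_{s_i} ≤ m·s_i for all i ∈ {1,...,k} equals Σ_{(κ_1,...,κ_n) ∈ K_σ} C(m+κ_1, κ_1) · C(m+κ_2−1, κ_2) · ... · C(m+κ_n−1, κ_n), where K_σ is the set of tuples (κ_1,...,κ_n) ∈ ℕ^n with κ_1 + ... + κ_n = n and κ_1 + ... + κ_{s_i} ≥ s_i for every i ∈ {1,...,k}, and C(a,b) denotes the binomial coefficient. -/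
open Finset Polynomial

/-- The number of lattice points of the `m`-th dilate of the composition
polytope `Q_σ`, i.e. the Ehrhart polynomial of `Q_σ` evaluated at `m`. -/
noncomputable def ehrCount (n : ℕ) (σ : List ℕ) (m : ℕ) : ℕ :=
  {a : Fin n → ℕ | ∀ i, 1 ≤ i → i ≤ σ.length →
    (∑ j ∈ Finset.univ.filter (fun j : Fin n => (j : ℕ) < pSum σ i), a j)
      ≤ m * pSum σ i}.ncard

/-- extension by zero of a tuple -/
def extZ {n : ℕ} (a : Fin n → ℕ) (k : ℕ) : ℕ := if h : k < n then a ⟨k, h⟩ else 0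

/-- partial sums of a tuple -/
def preS {n : ℕ} (a : Fin n → ℕ) (i : ℕ) : ℕ := ∑ k ∈ range (i + 1), extZ a k

/-- the blocks of values -/
def blk (m n j : ℕ) : Finset ℕ := (range (m * n + 1)).filter (fun u => (u - 1) / m = j)

/-- the number of partial sums with a given value -/
def cntS {n : ℕ} (a : Fin n → ℕ) (u : ℕ) : ℕ := ((range n).filter (fun i => preS a i = u)).card

lemma sum_filter_eq {n : ℕ} (a : Fin n → ℕ) (s : ℕ) :
    ∑ j ∈ Finset.univ.filter (fun j : Fin n => (j : ℕ) < s), a j = ∑ k ∈ range s, extZ a k := by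
  rw [Finset.sum_filter]
  have h1 : ∀ j : Fin n, (if (j : ℕ) < s then a j else 0)
      = (fun k => if k < s then extZ a k else 0) (j : ℕ) := by
    intro j
    simp [extZ]
  rw [Finset.sum_congr rfl (fun j _ => h1 j), Fin.sum_univ_eq_sum_range
    (fun k => if k < s then extZ a k else 0) n, ← Finset.sum_filter]
  apply Finset.sum_subset_zero_on_sdiff
  · intro k hk
    simp at hk ⊢
    exact hk.2
  · intro k hk
    simp at hk
    simp only [extZ]
    rw [dif_neg]
    omega
  · intros; rfl

lemma preS_mono {n : ℕ} (a : Fin n → ℕ) : Monotone (preS a) := by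
  intro i j h
  apply Finset.sum_le_sum_of_subset
  intro k; simp; omega

lemma mono_le_iff {b : ℕ → ℕ} (hb : Monotone b) {n s v : ℕ} (h1 : 1 ≤ s) (h2 : s ≤ n) :
    b (s - 1) ≤ v ↔ s ≤ ((range n).filter (fun i => b i ≤ v)).card := by
  constructor
  · intro h
    have : range s ⊆ (range n).filter (fun i => b i ≤ v) := by
      intro i hi
      simp at hi ⊢
      exact ⟨by omega, (hb (by omega)).trans h⟩
    simpa using Finset.card_le_card this
  · intro h
    by_contra hc
    have : (range n).filter (fun i => b i ≤ v) ⊆ range (s - 1) := by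
      intro i hi
      simp at hi ⊢
      by_contra hh
      have := hb (show s - 1 ≤ i by omega)
      omega
    have := Finset.card_le_card this
    simp at this
    omega

lemma sum_cnt {n : ℕ} (b : ℕ → ℕ) (v : ℕ) :
    ∑ u ∈ range (v + 1), ((range n).filter (fun i => b i = u)).card
      = ((range n).filter (fun i => b i ≤ v)).card := by
  rw [Finset.sum_card_fiberwise_eq_card_filter]
  simp

lemma exists_mono (n N : ℕ) (c : ℕ → ℕ) (h : ∑ u ∈ range (N + 1), c u = n) :
    ∃ b : ℕ → ℕ, Monotone b ∧ (∀ i < n, b i ≤ N) ∧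
      ∀ u ≤ N, ((range n).filter (fun i => b i = u)).card = c u := by
  set C : ℕ → ℕ := fun v => ∑ u ∈ range (v + 1), c u with hC
  have hCm : Monotone C := by
    intro i j hij
    apply Finset.sum_le_sum_of_subset
    intro k; simp; omega
  set b : ℕ → ℕ := fun i => ((range (N + 1)).filter (fun v => C v ≤ i)).card with hb
  have key : ∀ i v, v ≤ N → (b i ≤ v ↔ i < C v) := by
    intro i v hv
    have := mono_le_iff hCm (n := N + 1) (s := v + 1) (v := i) (by omega) (by omega)
    simp only [Nat.add_sub_cancel] at this
    have h2 : b i = ((range (N + 1)).filter (fun v => C v ≤ i)).card := rfl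
    rw [← h2] at this
    omega
  have hCN : C N = n := h
  have hcard : ∀ v ≤ N, ((range n).filter (fun i => b i ≤ v)).card = C v := by
    intro v hv
    have : (range n).filter (fun i => b i ≤ v) = range (C v) := by
      ext i
      have := hCm hv
      simp [key i v hv]
      omega
    rw [this, card_range]
  refine ⟨b, ?_, fun i hi => (key i N le_rfl).2 (by omega), ?_⟩
  · intro i j hij
    apply Finset.card_le_card
    intro v; simp; omega
  · intro u hu
    have h1 := hcard u hu
    rw [← sum_cnt, Finset.sum_range_succ] at h1
    rcases u with _ | u
    · simpa [hC] using h1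
    · have h2 := hcard u (by omega)
      rw [← sum_cnt] at h2
      rw [h2] at h1
      simp only [hC] at h1
      rw [Finset.sum_range_succ c (u + 1)] at h1
      omega

lemma exists_tuple (n : ℕ) (b : ℕ → ℕ) (hb : Monotone b) :
    ∃ a : Fin n → ℕ, ∀ i < n, preS a i = b i := by
  refine ⟨fun j => b j - (if (j : ℕ) = 0 then 0 else b (j - 1)), ?_⟩
  intro i
  induction i with
  | zero => intro hi; simp [preS, extZ, hi]
  | succ i ih =>
    intro hi
    have h1 := ih (by omega)
    have := hb (show i ≤ i + 1 by omega)
    unfold preS at h1 ⊢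
    rw [Finset.sum_range_succ, h1]
    simp [extZ, hi]
    omega

lemma preS_inj {n : ℕ} (a a' : Fin n → ℕ) (h : ∀ i < n, preS a i = preS a' i) : a = a' := by
  funext j
  have h1 := h j j.2
  have e : ∀ a : Fin n → ℕ, extZ a j = a j := by intro a; simp [extZ]
  simp only [preS] at h1
  rw [Finset.sum_range_succ, Finset.sum_range_succ, e, e] at h1
  rcases hj : (j : ℕ) with _ | k
  · rw [hj] at h1; simpa using h1
  · have h2 := h k (by omega)
    simp only [preS] at h2
    rw [hj] at h1
    omega

lemma sum_blk (m n s : ℕ) (h1 : 1 ≤ s) (h2 : s ≤ n) (f : ℕ → ℕ) :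
    ∑ j ∈ Finset.univ.filter (fun j : Fin n => (j : ℕ) < s), ∑ u ∈ blk m n j, f u
      = ∑ u ∈ range (m * s + 1), f u := by
  have key : ∀ u, u ≤ m * n → ((u - 1) / m < s ↔ u ≤ m * s) := by
    intro u hu
    rcases Nat.eq_zero_or_pos m with rfl | hm
    · simp at hu ⊢; omega
    · have := Nat.mul_pos hm h1
      rw [Nat.div_lt_iff_lt_mul hm, mul_comm s m]; omega
  have hle : m * s ≤ m * n := Nat.mul_le_mul_left m h2
  rw [sum_filter_eq (fun j : Fin n => ∑ u ∈ blk m n j, f u),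
    ← Finset.sum_fiberwise_of_maps_to (s := range (m * s + 1)) (t := range s)
      (g := fun u => (u - 1) / m)]
  · apply Finset.sum_congr rfl
    intro j hj
    have hj' : j < s := by simpa using hj
    have : j < n := by omega
    simp only [extZ, this, dif_pos]
    apply Finset.sum_congr _ (fun _ _ => rfl)
    ext u
    simp only [blk, mem_filter, mem_range]
    constructor
    · rintro ⟨h, rfl⟩
      have := key u (by omega)
      exact ⟨by omega, rfl⟩
    · rintro ⟨h, rfl⟩
      exact ⟨by omega, rfl⟩
  · intro u hu
    simp only [mem_range] at hu ⊢
    exact (key u (by omega)).2 (by omega)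

lemma card_blk (m n j : ℕ) (hj : j < n) : (blk m n j).card = if j = 0 then m + 1 else m := by
  have hle : m * (j + 1) ≤ m * n := Nat.mul_le_mul_left m hj
  rcases Nat.eq_zero_or_pos m with rfl | hm
  · by_cases h : j = 0
    · simp [blk, h]
    · simp [blk, h]; omega
  · have key : ∀ u, (u - 1) / m = j ↔ m * j ≤ u - 1 ∧ u - 1 < m * (j + 1) := by
      intro u
      rw [Nat.div_eq_iff hm]
      rw [mul_comm m j, mul_comm m, Nat.succ_mul]
      omega
    have : blk m n j = if j = 0 then range (m + 1) else Ioc (m * j) (m * (j + 1)) := by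
      ext u
      simp only [blk, mem_filter, key, mem_range]
      split_ifs with h
      · subst h; simp at *; omega
      · have := Nat.mul_pos hm (Nat.pos_of_ne_zero h)
        simp; omega
    rw [this]
    split_ifs
    · simp
    · simp [Nat.mul_succ]

lemma blk_unique {m n j j' u : ℕ} (h : u ∈ blk m n j) (h' : u ∈ blk m n j') : j = j' := by
  simp only [blk, mem_filter] at h h'
  rw [← h.2, h'.2]

lemma blk_exists {m n u : ℕ} (hn : 0 < n) (h : u ≤ m * n) : ∃ j : Fin n, u ∈ blk m n j := by
  have : (u - 1) / m < n := by
    rcases Nat.eq_zero_or_pos m with rfl | hm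
    · simpa
    · have := Nat.mul_pos hm hn
      rw [Nat.div_lt_iff_lt_mul hm, mul_comm n m]; omega
  exact ⟨⟨_, this⟩, by simp [blk]; omega⟩

lemma pSum_pos (σ : List ℕ) (hpos : ∀ r ∈ σ, 0 < r) (i : ℕ) (h1 : 1 ≤ i) (h2 : i ≤ σ.length) :
    1 ≤ pSum σ i := by
  rcases σ with _ | ⟨r, σ⟩
  · simp at h2; omega
  · obtain ⟨i, rfl⟩ := Nat.exists_eq_add_of_le' h1
    have := hpos r (by simp)
    simp [pSum]; omega

lemma pSum_le (σ : List ℕ) (i : ℕ) : pSum σ i ≤ σ.sum := by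
  have := List.sum_take_add_sum_drop σ i
  unfold pSum; omega

lemma pSum_length (σ : List ℕ) : pSum σ σ.length = σ.sum := by simp [pSum]

lemma card_piAntidiag_blk (s : Finset ℕ) (n : ℕ) :
    (Finset.piAntidiag s n).card = (s.card + n - 1).choose n := by
  rw [← Finset.card_finsuppAntidiag_nat_eq_choose]
  symm
  apply Finset.card_bij (fun (f : ℕ →₀ ℕ) _ => (f : ℕ → ℕ))
  · intro f hf
    rw [Finset.mem_finsuppAntidiag] at hf
    rw [Finset.mem_piAntidiag]
    exact ⟨hf.1, fun i hi => hf.2 (Finsupp.mem_support_iff.2 hi)⟩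
  · intro f _ g _ h
    exact DFunLike.coe_injective h
  · intro f hf
    rw [Finset.mem_piAntidiag] at hf
    refine ⟨Finsupp.onFinset s f hf.2, ?_, rfl⟩
    rw [Finset.mem_finsuppAntidiag]
    exact ⟨hf.1, Finsupp.support_onFinset_subset⟩

/-- the defining inequality, in terms of counts -/
lemma constr_iff {n : ℕ} (a : Fin n → ℕ) (m s : ℕ) (h1 : 1 ≤ s) (h2 : s ≤ n) :
    (∑ j ∈ Finset.univ.filter (fun j : Fin n => (j : ℕ) < s), a j) ≤ m * s ↔
      s ≤ ∑ j ∈ Finset.univ.filter (fun j : Fin n => (j : ℕ) < s), ∑ u ∈ blk m n j, cntS a u := by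
  rw [sum_blk m n s h1 h2]
  unfold cntS
  rw [sum_cnt, ← mono_le_iff (preS_mono a) h1 h2, sum_filter_eq]
  unfold preS
  rw [Nat.sub_add_cancel h1]

open scoped Classical in
/-- The Pitman–Stanley style formula for the Ehrhart polynomial of `Q_σ`:
a sum of products of binomial coefficients over the set `K_σ`. -/
theorem ehrhart_eq_sum_binomials (n : ℕ) (hn : 0 < n) (σ : List ℕ)
    (hpos : ∀ r ∈ σ, 0 < r) (hsum : σ.sum = n) (m : ℕ) :
    ehrCount n σ m =
      ∑ κ ∈ (Fintype.piFinset fun _ : Fin n => Finset.range (n + 1)).filter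
          (fun κ : Fin n → ℕ => (∑ j, κ j) = n ∧ ∀ i ∈ Finset.Icc 1 σ.length,
            pSum σ i ≤ ∑ j ∈ Finset.univ.filter
              (fun j : Fin n => (j : ℕ) < pSum σ i), κ j),
        ∏ j : Fin n,
          if (j : ℕ) = 0 then (m + κ j).choose (κ j)
          else (m + κ j - 1).choose (κ j) := by
  set K := (Fintype.piFinset fun _ : Fin n => Finset.range (n + 1)).filter
          (fun κ : Fin n → ℕ => (∑ j, κ j) = n ∧ ∀ i ∈ Finset.Icc 1 σ.length,
            pSum σ i ≤ ∑ j ∈ Finset.univ.filter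
              (fun j : Fin n => (j : ℕ) < pSum σ i), κ j) with hK
  have hprod : ∀ κ : Fin n → ℕ, (∏ j : Fin n,
          if (j : ℕ) = 0 then (m + κ j).choose (κ j)
          else (m + κ j - 1).choose (κ j)) =
      (Fintype.piFinset fun j : Fin n => Finset.piAntidiag (blk m n j) (κ j)).card := by
    intro κ
    rw [Fintype.card_piFinset]
    apply Finset.prod_congr rfl
    intro j _
    rw [card_piAntidiag_blk, card_blk m n j j.2]
    split_ifs
    · congr 1; omega
    · rfl
  rw [Finset.sum_congr rfl (fun κ _ => hprod κ), ← Finset.card_biUnion]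
  swap
  · intro κ _ κ' _ hne
    simp only [Function.onFun]
    rw [Finset.disjoint_left]
    intro d h1 h2
    apply hne
    funext j
    simp only [Fintype.mem_piFinset, Finset.mem_piAntidiag] at h1 h2
    rw [← (h1 j).1, (h2 j).1]
  have hlen : 1 ≤ σ.length := by
    rcases σ with _ | _
    · simp at hsum; omega
    · simp
  have hall : ∀ κ : Fin n → ℕ,
      ∑ j ∈ Finset.univ.filter (fun j : Fin n => (j : ℕ) < n), κ j = ∑ j, κ j := by
    intro κ; simp
  unfold ehrCount
  rw [← Set.ncard_coe_finset]
  -- bound on partial sums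
  have hbound : ∀ a : Fin n → ℕ, (∀ i, 1 ≤ i → i ≤ σ.length →
      (∑ j ∈ Finset.univ.filter (fun j : Fin n => (j : ℕ) < pSum σ i), a j)
      ≤ m * pSum σ i) → ∀ i < n, preS a i ≤ m * n := by
    intro a ha i hi
    have h := ha σ.length hlen le_rfl
    rw [pSum_length, hsum, sum_filter_eq] at h
    refine le_trans (preS_mono a (show i ≤ n - 1 by omega)) ?_
    unfold preS
    rwa [Nat.sub_add_cancel hn]
  refine Set.ncard_congr (fun a _ => fun (j : Fin n) u => if u ∈ blk m n j then cntS a u else 0)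
    ?_ ?_ ?_
  · intro a ha
    simp only [Set.mem_ofPred_eq] at ha
    simp only [coe_biUnion, Set.mem_iUnion, mem_coe]
    have htot : ∑ j : Fin n, ∑ u ∈ blk m n j, cntS a u = n := by
      rw [← hall (fun j => ∑ u ∈ blk m n j, cntS a u), sum_blk m n n hn le_rfl]
      unfold cntS
      rw [sum_cnt, Finset.filter_true_of_mem, card_range]
      intro i hi
      exact hbound a ha i (by simpa using hi)
    refine ⟨fun j => ∑ u ∈ blk m n j, cntS a u, ?_, ?_⟩
    · simp only [hK, mem_filter, Fintype.mem_piFinset, mem_range, mem_Icc]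
      refine ⟨?_, htot, ?_⟩
      · intro j
        have := Finset.single_le_sum (f := fun j : Fin n => ∑ u ∈ blk m n j, cntS a u)
          (fun _ _ => Nat.zero_le _) (Finset.mem_univ j)
        omega
      · rintro i ⟨h1, h2⟩
        exact (constr_iff a m _ (pSum_pos σ hpos i h1 h2) (hsum ▸ pSum_le σ i)).1 (ha i h1 h2)
    · simp only [Fintype.mem_piFinset, Finset.mem_piAntidiag]
      intro j
      refine ⟨Finset.sum_congr rfl (fun u hu => by simp [hu]), ?_⟩
      intro u hu
      by_contra hc
      simp [hc] at hu
  · intro a a' ha ha' h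
    simp only [Set.mem_ofPred_eq] at ha ha'
    have hc : ∀ u ≤ m * n, cntS a u = cntS a' u := by
      intro u hu
      obtain ⟨j, hj⟩ := blk_exists hn hu
      have := congrFun (congrFun h j) u
      simpa [hj] using this
    apply preS_inj
    intro i hi
    have hv : ∀ v ≤ m * n, (preS a i ≤ v ↔ preS a' i ≤ v) := by
      intro v hv
      have e := mono_le_iff (preS_mono a) (n := n) (s := i + 1) (v := v) (by omega) (by omega)
      have e' := mono_le_iff (preS_mono a') (n := n) (s := i + 1) (v := v) (by omega) (by omega)
      have ee : ∑ u ∈ range (v + 1), cntS a u = ∑ u ∈ range (v + 1), cntS a' u :=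
        Finset.sum_congr rfl (fun u hu => hc u (by simp at hu; omega))
      unfold cntS at ee
      rw [sum_cnt, sum_cnt] at ee
      rw [← ee] at e'
      exact e.trans e'.symm
    exact le_antisymm ((hv _ (hbound a' ha' i hi)).2 le_rfl) ((hv _ (hbound a ha i hi)).1 le_rfl)
  · intro d hd
    simp only [coe_biUnion, Set.mem_iUnion, mem_coe] at hd
    obtain ⟨κ, hκ, hd⟩ := hd
    simp only [hK, mem_filter, Fintype.mem_piFinset, mem_range, mem_Icc] at hκ
    simp only [Fintype.mem_piFinset, Finset.mem_piAntidiag] at hd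
    obtain ⟨-, hκn, hκ⟩ := hκ
    set c : ℕ → ℕ := fun u => ∑ j, d j u with hcdef
    have hc : ∀ (j : Fin n) u, u ∈ blk m n j → c u = d j u := by
      intro j u hu
      apply Finset.sum_eq_single_of_mem j (Finset.mem_univ j)
      intro j' _ hne
      by_contra h
      exact hne (Fin.ext (blk_unique ((hd j').2 u h) hu))
    have hcs : ∀ j : Fin n, ∑ u ∈ blk m n j, c u = κ j := by
      intro j
      rw [← (hd j).1]
      exact Finset.sum_congr rfl (fun u hu => hc j u hu)
    have hcn : ∑ u ∈ range (m * n + 1), c u = n := by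
      rw [← sum_blk m n n hn le_rfl, hall (fun j => ∑ u ∈ blk m n j, c u)]
      simp only [hcs, hκn]
    obtain ⟨b, hb, hbN, hbc⟩ := exists_mono n (m * n) c hcn
    obtain ⟨a, ha⟩ := exists_tuple n b hb
    have hcnt : ∀ u ≤ m * n, cntS a u = c u := by
      intro u hu
      rw [← hbc u hu]
      unfold cntS
      congr 1
      apply Finset.filter_congr
      intro i hi
      rw [ha i (by simpa using hi)]
    have hmem : ∀ (j : ℕ) u, u ∈ blk m n j → u ≤ m * n := by
      intro j u hu
      simp [blk] at hu; omega
    refine ⟨a, ?_, ?_⟩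
    · simp only [Set.mem_ofPred_eq]
      intro i h1 h2
      rw [constr_iff a m _ (pSum_pos σ hpos i h1 h2) (hsum ▸ pSum_le σ i)]
      refine (hκ i ⟨h1, h2⟩).trans (le_of_eq ?_)
      apply Finset.sum_congr rfl
      intro j _
      rw [← hcs j]
      exact Finset.sum_congr rfl (fun u hu => (hcnt u (hmem j u hu)).symm)
    · funext j u
      split_ifs with h
      · rw [hcnt u (hmem j u h), hc j u h]
      · by_contra h'
        exact h ((hd j).2 u (Ne.symm h'))
end
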